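/- Assume P does not lie on a median of ABC (a line joining a vertex to the midpoint of the opposite side). Then λ(P) = Q′ and λ(H) = Q; equivalently, T_P⁻¹(H) = T_{P′}⁻¹(Q). Moreover λ⁻¹(P′) = Q and λ⁻¹(H′) = Q′. -/

import Mathlib

noncomputable section

/-- The real affine plane. -/
abbrev Pt : Type := ℝ × ℝ

/-- `u` and `v` are parallel vectors (the zero vector is parallel to everything). -/
def Par (u v : Pt) : Prop := ∃ t : ℝ, u = t • v ∨ v = t • u

/-- The centroid of the triangle `ABC`. -/
def cent (A B C : Pt) : Pt := (3⁻¹ : ℝ) • (A + B + C)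

/-- The homothety with center `Z` and ratio `r`. -/
def homoth (Z : Pt) (r : ℝ) (X : Pt) : Pt := Z + r • (X - Z)

/-- The value at `p` of the quadratic polynomial with coefficient vector `c`. -/
def qval (c : Fin 6 → ℝ) (p : Pt) : ℝ :=
  c 0 * p.1 ^ 2 + c 1 * p.1 * p.2 + c 2 * p.2 ^ 2 + c 3 * p.1 + c 4 * p.2 + c 5

/-- `S` is a conic: the zero locus of a real polynomial of total degree 2. -/
def IsConic (S : Set Pt) : Prop :=
  ∃ c : Fin 6 → ℝ, ¬(c 0 = 0 ∧ c 1 = 0 ∧ c 2 = 0) ∧ S = {p | qval c p = 0}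

/-- `Z` is a center of symmetry of `S`. -/
def IsCenterOf (Z : Pt) (S : Set Pt) : Prop :=
  ∀ p ∈ S, (2 : ℝ) • Z - p ∈ S

/-- The gradient at `p` of the quadratic polynomial with coefficients `c`. -/
def qgrad (c : Fin 6 → ℝ) (p : Pt) : Pt :=
  (2 * c 0 * p.1 + c 1 * p.2 + c 3, c 1 * p.1 + 2 * c 2 * p.2 + c 4)

/-- The line through `X` and `Y`. -/
def lineThru (X Y : Pt) : Set Pt := {p | ∃ t : ℝ, p = X + t • (Y - X)}

/-- `L` is the tangent line at the nonsingular point `p` of the conic with coefficients `c`. -/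
def IsTangentLineAt (c : Fin 6 → ℝ) (L : Set Pt) (p : Pt) : Prop :=
  qval c p = 0 ∧ qgrad c p ≠ 0 ∧
  L = {q | (qgrad c p).1 * (q.1 - p.1) + (qgrad c p).2 * (q.2 - p.2) = 0}

/-! A trace `D` of `P` and the corresponding trace `D₃` of its isotomic conjugate `P'` are
reflections of each other in a side midpoint, so `T_P X + T_{P'} X = A + B + C - X` on the plane of
the triangle. Since `T_P` sends `Q' = K(P)` to `P`, it follows that `T_{P'}` fixes `Q'`, whence
`λ(P) = Q'`; exchanging `P` and `P'`, `T_P` fixes `Q` and `T_{P'}` sends `Q` to `P'`.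

For the orthocenter, `λ` maps the line `AP`, which contains `D`, to a line through `λ(P) = Q'` and
`λ(D) = D₃`. This locates `λ(A)`, and shows that the line from `λ(A)` to `Q` is parallel to
`D₃P'`. Pulling back by `T_{P'}`, the point `T_{P'}⁻¹(Q)` lies on the parallel to `AQ` through
`T_P⁻¹(A)`, and likewise for `B` and `C`. As `T_P` maps `AQ` to `DQ`, the pullback by `T_P` of the
conditions defining `H` puts `T_P⁻¹(H)` on the same three lines, which have at most one point in
common. -/

section Generalized

variable {k V : Type*} [Field k] [AddCommGroup V] [Module k V]

open AffineMap Submodule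

/-- `(x, y, z)` are the normalized barycentric coordinates of `P` with respect to `ABC`. -/
structure IsBarycentric (A B C P : V) (x y z : k) : Prop where
  sum_eq_one : x + y + z = 1
  eq_smul_add : P = x • A + y • B + z • C

variable (k) in
/-- `D` is the trace on `BC` of the line `AP`. -/
def IsTrace (A B C P D : V) : Prop :=
  Collinear k {A, P, D} ∧ Collinear k {B, C, D}

/-- `T` maps the vertices of `ABC` to the traces of `P`, so that it is the map `T_P`. -/
def IsCevianMap (A B C P : V) (T : V ≃ᵃ[k] V) : Prop :=
  IsTrace k A B C P (T A) ∧ IsTrace k B A C P (T B) ∧ IsTrace k C A B P (T C)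

/-- `P` and `P'`, with barycentric coordinates `(x, y, z)` and `(x', y', z')`, are isotomic
conjugates of each other, neither of them on a side line of `ABC`. The formula
`ι(x : y : z) = (yz : zx : xy)` is encoded symmetrically: the products of corresponding coordinates
agree. -/
structure IsIsotomicPair (A B C P P' : V) (x y z x' y' z' : k) : Prop where
  left : IsBarycentric A B C P x y z
  right : IsBarycentric A B C P' x' y' z'
  left_ne_zero : x ≠ 0 ∧ y ≠ 0 ∧ z ≠ 0
  right_ne_zero : x' ≠ 0 ∧ y' ≠ 0 ∧ z' ≠ 0
  mul_eq₁₂ : x * x' = y * y'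
  mul_eq₂₃ : y * y' = z * z'

variable (k) in
/-- The complement map `K`, i.e. the homothety with ratio `-1/2` about the centroid of `ABC`,
written so as to make sense in characteristic 3 too. -/
def complement (A B C X : V) : V :=
  (2⁻¹ : k) • (A + B + C - X)

variable (k) in
/-- `u` and `v` are parallel vectors: the relation `Par` over an arbitrary field. -/
def IsParallel (u v : V) : Prop :=
  ∃ t : k, u = t • v ∨ v = t • u

/-- `H` is the generalized orthocenter of the point with cevian map `T` and isotomcomplement `Q`. -/
def IsGeneralizedOrthocenter (A B C Q : V) (T : V ≃ᵃ[k] V) (H : V) : Prop :=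
  IsParallel k (H - A) (T A - Q) ∧ IsParallel k (H - B) (T B - Q) ∧ IsParallel k (H - C) (T C - Q)

variable {A B C D D' P P' Q Q' H S X : V} {T T' : V ≃ᵃ[k] V} {x y z x' y' z' : k}

theorem IsParallel.mem_span {u v : V} (h : IsParallel k u v) (hv : v ≠ 0) : u ∈ k ∙ v := by
  obtain ⟨t, rfl | rfl⟩ := h
  · exact smul_mem _ t (mem_span_singleton_self v)
  · have ht : t ≠ 0 := (smul_ne_zero_iff.1 hv).1
    exact mem_span_singleton.2 ⟨t⁻¹, inv_smul_smul₀ ht u⟩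

theorem eq_zero_of_mem_span_sub_of_not_collinear {w : V} (hABC : ¬ Collinear k {A, B, C})
    (hA : w ∈ k ∙ (A - Q)) (hB : w ∈ k ∙ (B - Q)) (hC : w ∈ k ∙ (C - Q)) : w = 0 := by
  by_contra hw
  have on_line (X : V) (hX : w ∈ k ∙ (X - Q)) : ∃ r : k, X = r • w +ᵥ Q := by
    obtain ⟨t, rfl⟩ := mem_span_singleton.1 hX
    have ht : t ≠ 0 := (smul_ne_zero_iff.1 hw).1
    exact ⟨t⁻¹, by simp [inv_smul_smul₀ ht]⟩
  refine hABC ((collinear_iff_exists_forall_eq_smul_vadd _).2 ⟨Q, w, ?_⟩)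
  simpa using ⟨on_line A hA, on_line B hB, on_line C hC⟩

theorem symm_sub_symm_mem_span {a b c d : V} (h : a - b ∈ k ∙ (T c - T d)) :
    T.symm a - T.symm b ∈ k ∙ (c - d) := by
  obtain ⟨t, ht⟩ := mem_span_singleton.1 h
  refine mem_span_singleton.2 ⟨t, T.linear.injective ?_⟩
  have linear_sub (p q : V) : T.linear (p - q) = T p - T q := T.toAffineMap.linearMap_vsub p q
  simp [linear_sub, ht, -map_sub]

theorem coeff_eq_zero_of_not_collinear (hABC : ¬ Collinear k {A, B, C}) (hsum : x + y + z = 0)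
    (h : x • A + y • B + z • C = 0) : x = 0 ∧ y = 0 ∧ z = 0 := by
  have coeff_eq_zero := affineIndependent_iff.1 (affineIndependent_iff_not_collinear_set.2 hABC)
    Finset.univ ![x, y, z] (by simpa [Fin.sum_univ_three]) (by simpa [Fin.sum_univ_three])
  exact ⟨coeff_eq_zero 0 (by simp), coeff_eq_zero 1 (by simp), coeff_eq_zero 2 (by simp)⟩

namespace IsBarycentric

theorem swap (hP : IsBarycentric A B C P x y z) : IsBarycentric B A C P y x z :=
  ⟨by rw [← hP.sum_eq_one]; ring, by rw [hP.eq_smul_add]; module⟩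

theorem rotate (hP : IsBarycentric A B C P x y z) : IsBarycentric C A B P z x y :=
  ⟨by rw [← hP.sum_eq_one]; ring, by rw [hP.eq_smul_add]; module⟩

theorem map {W : Type*} [AddCommGroup W] [Module k W] (hP : IsBarycentric A B C P x y z)
    (f : V →ᵃ[k] W) : IsBarycentric (f A) (f B) (f C) (f P) x y z := by
  refine ⟨hP.sum_eq_one, ?_⟩
  obtain rfl : x = 1 - y - z := by linear_combination hP.sum_eq_one
  have apply_eq (v : V) : f v = f.linear v + f 0 := congrFun f.decomp v
  rw [hP.eq_smul_add, apply_eq (_ + _), apply_eq A, apply_eq B, apply_eq C]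
  simp only [map_add, map_smul]
  module

theorem ne_vertex (hABC : ¬ Collinear k {A, B, C}) (hP : IsBarycentric A B C P x y z)
    (hy : y ≠ 0) : P ≠ A := by
  intro h
  have hrel : (x - 1) • A + y • B + z • C = 0 := by
    rw [← sub_eq_zero.2 h, hP.eq_smul_add]
    module
  exact hy (coeff_eq_zero_of_not_collinear hABC (by linear_combination hP.sum_eq_one) hrel).2.1

end IsBarycentric

theorem isBarycentric_complement [NeZero (2 : k)] (hP : IsBarycentric A B C P x y z) :
    IsBarycentric A B C (complement k A B C P) ((1 - x) / 2) ((1 - y) / 2) ((1 - z) / 2) := by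
  have h2 : (2 : k) ≠ 0 := two_ne_zero
  refine ⟨?_, ?_⟩
  · field_simp
    linear_combination -hP.sum_eq_one
  · rw [complement, hP.eq_smul_add]
    module

theorem IsTrace.exists_eq_lineMap (hABC : ¬ Collinear k {A, B, C})
    (hP : IsBarycentric A B C P x y z) (hy : y ≠ 0) (hD : IsTrace k A B C P D) :
    ∃ s : k, s * (1 - x) = 1 ∧ D = lineMap A P s := by
  have mem_line {X Y Z : V} (hXYZ : Collinear k {X, Y, Z}) (hXY : X ≠ Y) : Z ∈ line[k, X, Y] :=
    hXYZ.mem_affineSpan_of_mem_of_ne (by simp) (by simp) (by simp) hXY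
  obtain ⟨s, hs⟩ := mem_affineSpan_pair_iff_exists_lineMap_eq.1
    (mem_line hD.1 (hP.ne_vertex hABC hy).symm)
  obtain ⟨t, ht⟩ := mem_affineSpan_pair_iff_exists_lineMap_eq.1
    (mem_line hD.2 (ne₂₃_of_not_collinear hABC))
  refine ⟨s, ?_, hs.symm⟩
  have hrel : (1 - s + s * x) • A + (s * y - (1 - t)) • B + (s * z - t) • C = 0 := by
    rw [← sub_eq_zero.2 (hs.trans ht.symm), lineMap_apply_module, lineMap_apply_module,
      hP.eq_smul_add]
    module
  have hA := (coeff_eq_zero_of_not_collinear hABC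
    (by linear_combination s * hP.sum_eq_one) hrel).1
  linear_combination -hA

theorem IsTrace.coord_ne_one (hABC : ¬ Collinear k {A, B, C})
    (hP : IsBarycentric A B C P x y z) (hy : y ≠ 0) (hD : IsTrace k A B C P D) : x ≠ 1 := by
  obtain ⟨s, hs, -⟩ := hD.exists_eq_lineMap hABC hP hy
  rintro rfl
  simp at hs

theorem IsTrace.eq_lineMap (hABC : ¬ Collinear k {A, B, C})
    (hP : IsBarycentric A B C P x y z) (hy : y ≠ 0) (hD : IsTrace k A B C P D) :
    P = lineMap D A x := by
  obtain ⟨s, hs, rfl⟩ := hD.exists_eq_lineMap hABC hP hy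
  obtain rfl : x = 1 - s⁻¹ := by rw [← eq_inv_of_mul_eq_one_right hs]; ring
  have hs0 : s ≠ 0 := left_ne_zero_of_mul_eq_one hs
  simp only [lineMap_apply_module]
  match_scalars <;> field_simp <;> ring

theorem IsTrace.add_eq_add (hABC : ¬ Collinear k {A, B, C})
    (hP : IsBarycentric A B C P x y z) (hP' : IsBarycentric A B C P' x' y' z')
    (hy : y ≠ 0) (hy' : y' ≠ 0) (h : y * y' = z * z')
    (hD : IsTrace k A B C P D) (hD' : IsTrace k A B C P' D') : D + D' = B + C := by
  have hx : 1 - x ≠ 0 := sub_ne_zero.2 (hD.coord_ne_one hABC hP hy).symm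
  have hx' : 1 - x' ≠ 0 := sub_ne_zero.2 (hD'.coord_ne_one hABC hP' hy').symm
  have smul_D : (1 - x) • D = y • B + z • C := by
    have := hD.eq_lineMap hABC hP hy
    rw [lineMap_apply_module, hP.eq_smul_add] at this
    linear_combination (norm := module) -this
  have smul_D' : (1 - x') • D' = y' • B + z' • C := by
    have := hD'.eq_lineMap hABC hP' hy'
    rw [lineMap_apply_module, hP'.eq_smul_add] at this
    linear_combination (norm := module) -this
  refine smul_right_injective V (mul_ne_zero hx hx') ?_
  calc ((1 - x) * (1 - x')) • (D + D')
      = (1 - x') • (1 - x) • D + (1 - x) • (1 - x') • D' := by module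
    _ = ((1 - x) * (1 - x')) • (B + C) := by
      rw [smul_D, smul_D']
      match_scalars
      · linear_combination h + (1 - x - y) * hP'.sum_eq_one + z' * hP.sum_eq_one
      · linear_combination -h + (1 - x - z) * hP'.sum_eq_one + y' * hP.sum_eq_one

theorem apply_add_apply_eq_sub_of_isBarycentric {f g : V →ᵃ[k] V}
    (hX : IsBarycentric A B C X x y z) (hA : f A + g A = S - A) (hB : f B + g B = S - B)
    (hC : f C + g C = S - C) : f X + g X = S - X := by
  obtain rfl : x = 1 - y - z := by linear_combination hX.sum_eq_one
  rw [(hX.map f).eq_smul_add, (hX.map g).eq_smul_add, hX.eq_smul_add]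
  linear_combination (norm := module) (1 - y - z) • hA + y • hB + z • hC

namespace IsCevianMap

theorem eq_lineMap (hABC : ¬ Collinear k {A, B, C}) (hP : IsBarycentric A B C P x y z)
    (hx : x ≠ 0) (hy : y ≠ 0) (hT : IsCevianMap A B C P T) :
    P = lineMap (T A) A x ∧ P = lineMap (T B) B y ∧ P = lineMap (T C) C z :=
  have hBAC : ¬ Collinear k {B, A, C} := by rwa [Set.insert_comm]
  have hCAB : ¬ Collinear k {C, A, B} := by rwa [Set.insert_comm, Set.pair_comm]
  ⟨hT.1.eq_lineMap hABC hP hy, hT.2.1.eq_lineMap hBAC hP.swap hx,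
    hT.2.2.eq_lineMap hCAB hP.rotate hx⟩

theorem coord_ne_one (hABC : ¬ Collinear k {A, B, C}) (hP : IsBarycentric A B C P x y z)
    (hx : x ≠ 0) (hy : y ≠ 0) (hT : IsCevianMap A B C P T) : x ≠ 1 ∧ y ≠ 1 :=
  have hBAC : ¬ Collinear k {B, A, C} := by rwa [Set.insert_comm]
  ⟨hT.1.coord_ne_one hABC hP hy, hT.2.1.coord_ne_one hBAC hP.swap hx⟩

theorem map_complement [NeZero (2 : k)] (hABC : ¬ Collinear k {A, B, C})
    (hP : IsBarycentric A B C P x y z) (hx : x ≠ 0) (hy : y ≠ 0) (hT : IsCevianMap A B C P T) :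
    T (complement k A B C P) = P := by
  have h2 : (2 : k) ≠ 0 := two_ne_zero
  obtain ⟨hA, hB, hC⟩ := hT.eq_lineMap hABC hP hx hy
  rw [lineMap_apply_module] at hA hB hC
  have hmap : T (complement k A B C P) =
      ((1 - x) / 2) • T A + ((1 - y) / 2) • T B + ((1 - z) / 2) • T C :=
    ((isBarycentric_complement hP).map T.toAffineMap).eq_smul_add
  calc T (complement k A B C P)
      = (2⁻¹ : k) • ((P - x • A) + (P - y • B) + (P - z • C)) := by
        rw [hmap]
        linear_combination (norm := module) -(2⁻¹ : k) • (hA + hB + hC)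
    _ = (2⁻¹ : k) • ((3 : k) • P - (x • A + y • B + z • C)) := by module
    _ = P := by
        rw [← hP.eq_smul_add]
        match_scalars
        field_simp
        ring

theorem apply_add_apply_eq_sub (hABC : ¬ Collinear k {A, B, C})
    (h : IsIsotomicPair A B C P P' x y z x' y' z')
    (hT : IsCevianMap A B C P T) (hT' : IsCevianMap A B C P' T') :
    T A + T' A = A + B + C - A ∧ T B + T' B = A + B + C - B ∧ T C + T' C = A + B + C - C := by
  have hBAC : ¬ Collinear k {B, A, C} := by rwa [Set.insert_comm]
  have hCAB : ¬ Collinear k {C, A, B} := by rwa [Set.insert_comm, Set.pair_comm]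
  obtain ⟨hP, hP', ⟨hx, hy, -⟩, ⟨hx', hy', -⟩, hxy, hyz⟩ := h
  refine ⟨?_, ?_, ?_⟩
  · rw [hT.1.add_eq_add hABC hP hP' hy hy' hyz hT'.1]
    abel
  · rw [hT.2.1.add_eq_add hBAC hP.swap hP'.swap hx hx' (hxy.trans hyz) hT'.2.1]
    abel
  · rw [hT.2.2.add_eq_add hCAB hP.rotate hP'.rotate hx hx' hxy hT'.2.2]
    abel

theorem map_complement_eq_self [NeZero (2 : k)] (hABC : ¬ Collinear k {A, B, C})
    (h : IsIsotomicPair A B C P P' x y z x' y' z')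
    (hT : IsCevianMap A B C P T) (hT' : IsCevianMap A B C P' T') :
    T' (complement k A B C P) = complement k A B C P := by
  have hTQ' := hT.map_complement hABC h.left h.left_ne_zero.1 h.left_ne_zero.2.1
  obtain ⟨hA, hB, hC⟩ := hT.apply_add_apply_eq_sub hABC h hT'
  have hadd : T (complement k A B C P) + T' (complement k A B C P) =
      A + B + C - complement k A B C P :=
    apply_add_apply_eq_sub_of_isBarycentric (f := T.toAffineMap) (g := T'.toAffineMap)
      (isBarycentric_complement h.left) hA hB hC
  have htwo : (2 : k) • complement k A B C P = A + B + C - P :=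
    smul_inv_smul₀ two_ne_zero _
  rw [hTQ'] at hadd
  linear_combination (norm := module) hadd - htwo

theorem map_symm_eq_complement [NeZero (2 : k)] (hABC : ¬ Collinear k {A, B, C})
    (h : IsIsotomicPair A B C P P' x y z x' y' z')
    (hT : IsCevianMap A B C P T) (hT' : IsCevianMap A B C P' T') :
    T' (T.symm P) = complement k A B C P := by
  have hTQ' := hT.map_complement hABC h.left h.left_ne_zero.1 h.left_ne_zero.2.1
  rw [← hT.map_complement_eq_self hABC h hT', T.symm_apply_eq.2 hTQ'.symm]

end IsCevianMap

theorem symm_sub_symm_mem_span_of_lineMap [NeZero (2 : k)] (hx : x ≠ 0) (hx' : x' ≠ 0)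
    (hP : P = lineMap (T A) A x) (hP' : P' = lineMap (T' A) A x') (hA : T A + T' A = S - A)
    (hQ : Q = (2⁻¹ : k) • (S - P')) (hQ' : Q' = (2⁻¹ : k) • (S - P))
    (hTQ' : T Q' = P) (hT'Q' : T' Q' = Q') (hT'Q : T' Q = P') :
    T'.symm Q - T.symm A ∈ k ∙ (A - Q) := by
  have h2 : (2 : k) ≠ 0 := two_ne_zero
  -- `L` is the point `λ(A)`.
  set L := T' (T.symm A) with hL
  have hQ'L : Q' = lineMap (T' A) L x := by
    rw [← hT'Q', hL, ← T.symm_apply_apply Q', hTQ', hP, T.symm.apply_lineMap,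
      T.symm_apply_apply, T'.apply_lineMap]
  have hL_eq : L = x⁻¹ • (Q' - (1 - x) • T' A) := by
    rw [hQ'L, lineMap_apply_module, add_sub_cancel_left, inv_smul_smul₀ hx]
  have hmem : Q - L ∈ k ∙ (T' A - T' Q) := by
    refine mem_span_singleton.2 ⟨-(2 - x' - x⁻¹) / (2 * x'), ?_⟩
    have hTA : T A = S - A - T' A := eq_sub_of_add_eq hA
    rw [hT'Q, hL_eq, hQ, hQ', hP, hP', hTA]
    simp only [lineMap_apply_module]
    match_scalars <;> field_simp <;> ring
  simpa [hL] using symm_sub_symm_mem_span hmem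

theorem IsIsotomicPair.symm (h : IsIsotomicPair A B C P P' x y z x' y' z') :
    IsIsotomicPair A B C P' P x' y' z' x y z :=
  ⟨h.right, h.left, h.right_ne_zero, h.left_ne_zero, by simpa [mul_comm] using h.mul_eq₁₂,
    by simpa [mul_comm] using h.mul_eq₂₃⟩

namespace IsCevianMap

theorem symm_sub_symm_vertices_mem_span [NeZero (2 : k)]
    (hABC : ¬ Collinear k {A, B, C}) (h : IsIsotomicPair A B C P P' x y z x' y' z')
    (hT : IsCevianMap A B C P T) (hT' : IsCevianMap A B C P' T')
    (hQ : Q = complement k A B C P') :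
    T'.symm Q - T.symm A ∈ k ∙ (A - Q) ∧ T'.symm Q - T.symm B ∈ k ∙ (B - Q) ∧
      T'.symm Q - T.symm C ∈ k ∙ (C - Q) := by
  obtain ⟨hx, hy, hz⟩ := h.left_ne_zero
  obtain ⟨hx', hy', hz'⟩ := h.right_ne_zero
  have hTQ' := hT.map_complement hABC h.left hx hy
  have hT'Q' := hT.map_complement_eq_self hABC h hT'
  have hT'Q : T' Q = P' := hQ ▸ hT'.map_complement hABC h.right hx' hy'
  obtain ⟨hPA, hPB, hPC⟩ := hT.eq_lineMap hABC h.left hx hy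
  obtain ⟨hPA', hPB', hPC'⟩ := hT'.eq_lineMap hABC h.right hx' hy'
  obtain ⟨hA, hB, hC⟩ := hT.apply_add_apply_eq_sub hABC h hT'
  exact ⟨symm_sub_symm_mem_span_of_lineMap hx hx' hPA hPA' hA hQ rfl hTQ' hT'Q' hT'Q,
    symm_sub_symm_mem_span_of_lineMap hy hy' hPB hPB' hB hQ rfl hTQ' hT'Q' hT'Q,
    symm_sub_symm_mem_span_of_lineMap hz hz' hPC hPC' hC hQ rfl hTQ' hT'Q' hT'Q⟩

theorem complement_ne_vertex [NeZero (2 : k)] (hABC : ¬ Collinear k {A, B, C})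
    (hP : IsBarycentric A B C P x y z) (hx : x ≠ 0) (hy : y ≠ 0) (hT : IsCevianMap A B C P T) :
    complement k A B C P ≠ A ∧ complement k A B C P ≠ B ∧ complement k A B C P ≠ C := by
  have hBAC : ¬ Collinear k {B, A, C} := by rwa [Set.insert_comm]
  have hCAB : ¬ Collinear k {C, A, B} := by rwa [Set.insert_comm, Set.pair_comm]
  obtain ⟨hx1, hy1⟩ := hT.coord_ne_one hABC hP hx hy
  have hx2 : (1 - x) / 2 ≠ 0 := div_ne_zero (sub_ne_zero.2 hx1.symm) two_ne_zero
  have hy2 : (1 - y) / 2 ≠ 0 := div_ne_zero (sub_ne_zero.2 hy1.symm) two_ne_zero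
  have hK := isBarycentric_complement hP
  exact ⟨hK.ne_vertex hABC hy2, hK.swap.ne_vertex hBAC hx2, hK.rotate.ne_vertex hCAB hx2⟩

theorem symm_apply_generalizedOrthocenter [NeZero (2 : k)] (hABC : ¬ Collinear k {A, B, C})
    (h : IsIsotomicPair A B C P P' x y z x' y' z')
    (hT : IsCevianMap A B C P T) (hT' : IsCevianMap A B C P' T')
    (hH : IsGeneralizedOrthocenter A B C (complement k A B C P') T H) :
    T.symm H = T'.symm (complement k A B C P') := by
  set Q := complement k A B C P' with hQ
  have hTQ : T Q = Q := hT'.map_complement_eq_self hABC h.symm hT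
  have on_parallel {X : V} (hX : Q ≠ X) (hpar : IsParallel k (H - X) (T X - Q)) :
      T.symm H - T.symm X ∈ k ∙ (X - Q) := by
    rw [← hTQ] at hpar
    have hne : T X - T Q ≠ 0 := sub_ne_zero.2 (T.injective.ne hX.symm)
    exact symm_sub_symm_mem_span (hpar.mem_span hne)
  obtain ⟨hQA, hQB, hQC⟩ := hT'.complement_ne_vertex hABC h.right h.right_ne_zero.1
    h.right_ne_zero.2.1
  obtain ⟨hA, hB, hC⟩ := hT.symm_sub_symm_vertices_mem_span hABC h hT' hQ
  have sub_mem_span {X : V} (hHX : T.symm H - T.symm X ∈ k ∙ (X - Q))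
      (hQX : T'.symm Q - T.symm X ∈ k ∙ (X - Q)) :
      T.symm H - T'.symm Q ∈ k ∙ (X - Q) := by
    simpa using sub_mem hHX hQX
  exact sub_eq_zero.1 <| eq_zero_of_mem_span_sub_of_not_collinear hABC
    (sub_mem_span (on_parallel hQA hH.1) hA) (sub_mem_span (on_parallel hQB hH.2.1) hB)
    (sub_mem_span (on_parallel hQC hH.2.2) hC)

end IsCevianMap

theorem isIsotomicPair_of_barycentric (hP : IsBarycentric A B C P x y z) (hx : x ≠ 0)
    (hy : y ≠ 0) (hz : z ≠ 0) (hst : x * y + y * z + z * x ≠ 0)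
    (hP' : P' = (y * z / (x * y + y * z + z * x)) • A + (x * z / (x * y + y * z + z * x)) • B
      + (x * y / (x * y + y * z + z * x)) • C) :
    IsIsotomicPair A B C P P' x y z (y * z / (x * y + y * z + z * x))
      (x * z / (x * y + y * z + z * x)) (x * y / (x * y + y * z + z * x)) where
  left := hP
  right := ⟨by rw [← add_div, ← add_div, div_eq_one_iff_eq hst]; ring, hP'⟩
  left_ne_zero := ⟨hx, hy, hz⟩
  right_ne_zero := ⟨div_ne_zero (mul_ne_zero hy hz) hst, div_ne_zero (mul_ne_zero hx hz) hst,
    div_ne_zero (mul_ne_zero hx hy) hst⟩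
  mul_eq₁₂ := by ring
  mul_eq₂₃ := by ring

theorem lambda_maps_P_to_Q'_and_H_to_Q_general [NeZero (2 : k)] {H' : V}
    (hABC : AffineIndependent k ![A, B, C]) (h : IsIsotomicPair A B C P P' x y z x' y' z')
    (hQ : Q = complement k A B C P') (hQ' : Q' = complement k A B C P)
    (hT : IsCevianMap A B C P T) (hT' : IsCevianMap A B C P' T')
    (hH : IsGeneralizedOrthocenter A B C Q T H) (hH' : IsGeneralizedOrthocenter A B C Q' T' H') :
    T' (T.symm P) = Q' ∧ T' (T.symm H) = Q ∧ T.symm H = T'.symm Q ∧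
      T (T'.symm P') = Q ∧ T (T'.symm H') = Q' := by
  have hABC' : ¬ Collinear k {A, B, C} := affineIndependent_iff_not_collinear_set.1 hABC
  subst hQ hQ'
  have hN := hT.symm_apply_generalizedOrthocenter hABC' h hT' hH
  have hN' := hT'.symm_apply_generalizedOrthocenter hABC' h.symm hT hH'
  exact ⟨hT.map_symm_eq_complement hABC' h hT', by rw [hN, T'.apply_symm_apply], hN,
    hT'.map_symm_eq_complement hABC' h.symm hT, by rw [hN', T.apply_symm_apply]⟩

theorem homoth_cent_neg_half_eq_complement (A B C X : Pt) :
    homoth (cent A B C) (-(1 / 2)) X = complement ℝ A B C X := by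
  rw [homoth, cent, complement]
  module

end Generalized

theorem lambda_maps_P_to_Q'_and_H_to_Q
    (A B C P P' Q Q' D E F D₃ E₃ F₃ : Pt) (x y z : ℝ)
    (hABC : AffineIndependent ℝ ![A, B, C])
    (hsum : x + y + z = 1)
    (hPco : P = x • A + y • B + z • C)
    (hx0 : x ≠ 0) (hy0 : y ≠ 0) (hz0 : z ≠ 0)
    (hx1 : x ≠ 1) (hy1 : y ≠ 1) (hz1 : z ≠ 1)
    (hst : x * y + y * z + z * x ≠ 0)
    (hP' : P' = (y * z / (x * y + y * z + z * x)) • A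
        + (x * z / (x * y + y * z + z * x)) • B
        + (x * y / (x * y + y * z + z * x)) • C)
    (hQ : Q = homoth (cent A B C) (-(1 / 2)) P')
    (hQ' : Q' = homoth (cent A B C) (-(1 / 2)) P)
    (hD : Collinear ℝ {A, P, D} ∧ Collinear ℝ {B, C, D})
    (hE : Collinear ℝ {B, P, E} ∧ Collinear ℝ {A, C, E})
    (hF : Collinear ℝ {C, P, F} ∧ Collinear ℝ {A, B, F})
    (hD₃ : Collinear ℝ {A, P', D₃} ∧ Collinear ℝ {B, C, D₃})
    (hE₃ : Collinear ℝ {B, P', E₃} ∧ Collinear ℝ {A, C, E₃})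
    (hF₃ : Collinear ℝ {C, P', F₃} ∧ Collinear ℝ {A, B, F₃})
    (hxy : x ≠ y) (hyz : y ≠ z) (hxz : x ≠ z)
    (TP : Pt ≃ᵃ[ℝ] Pt) (hTP : TP A = D ∧ TP B = E ∧ TP C = F)
    (TP' : Pt ≃ᵃ[ℝ] Pt) (hTP' : TP' A = D₃ ∧ TP' B = E₃ ∧ TP' C = F₃)
    (O H : Pt)
    (hO : Par (midpoint ℝ B C - O) (D - Q) ∧ Par (midpoint ℝ C A - O) (E - Q) ∧
          Par (midpoint ℝ A B - O) (F - Q))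
    (hH : Par (H - A) (D - Q) ∧ Par (H - B) (E - Q) ∧ Par (H - C) (F - Q))
    (O' H' : Pt)
    (hO' : Par (midpoint ℝ B C - O') (D₃ - Q') ∧ Par (midpoint ℝ C A - O') (E₃ - Q') ∧
           Par (midpoint ℝ A B - O') (F₃ - Q'))
    (hH' : Par (H' - A) (D₃ - Q') ∧ Par (H' - B) (E₃ - Q') ∧ Par (H' - C) (F₃ - Q')) :
    TP' (TP.symm P) = Q' ∧ TP' (TP.symm H) = Q ∧ TP.symm H = TP'.symm Q ∧
    TP (TP'.symm P') = Q ∧ TP (TP'.symm H') = Q'  := by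
  obtain ⟨rfl, rfl, rfl⟩ := hTP
  obtain ⟨rfl, rfl, rfl⟩ := hTP'
  exact lambda_maps_P_to_Q'_and_H_to_Q_general hABC
    (isIsotomicPair_of_barycentric ⟨hsum, hPco⟩ hx0 hy0 hz0 hst hP')
    (hQ.trans (homoth_cent_neg_half_eq_complement ..))
    (hQ'.trans (homoth_cent_neg_half_eq_complement ..))
    ⟨hD, hE, hF⟩ ⟨hD₃, hE₃, hF₃⟩ hH hH'
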